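/- arXiv:0804.1491 — 3 statements merged into one kernel-verified Lean document; each statement's English description precedes it below -/
import Mathlib

section
/- Let N be a subgroup of GAₙ consisting of jacobian automorphisms which is normal in the group Jₙ of jacobian automorphisms (i.e. φ∘G∘φ⁻¹ ∈ N for every G ∈ N and every jacobian φ ∈ GAₙ), and suppose N contains every diagonal automorphism whose jacobian determinant equals 1. Then every tame jacobian automorphism belongs to N. -/
open MvPolynomial

/-- The group `GAₙ` of polynomial automorphisms of `kⁿ`, identified with the group of
`k`-algebra automorphisms of the polynomial ring `k[X₁,…,Xₙ]`; under this identification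
composition of polynomial maps corresponds to reversed composition of algebra
automorphisms: `(F∘G)* = G* ∘ F*`; in particular the polynomial map `φ∘G∘φ⁻¹`
corresponds to the group element `φ⁻¹ * G * φ`. -/
abbrev PolyAut (k : Type*) [Field k] (n : ℕ) :=
  MvPolynomial (Fin n) k ≃ₐ[k] MvPolynomial (Fin n) k

/-- `G` is jacobian if the determinant of its jacobian matrix `(∂G*(Xᵢ)/∂Xⱼ)` equals 1. -/
def IsJacobian {k : Type*} [Field k] {n : ℕ} (G : PolyAut k n) : Prop :=
  (Matrix.of fun i j : Fin n => MvPolynomial.pderiv j (G (X i))).det = 1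

/-- `G` is diagonal if `G*(Xᵢ) = cᵢ Xᵢ` with all `cᵢ ≠ 0`. -/
def IsDiagonal {k : Type*} [Field k] {n : ℕ} (G : PolyAut k n) : Prop :=
  ∀ i : Fin n, ∃ c : k, c ≠ 0 ∧ G (X i) = C c * X i

/-- `G` is elementary if for some index `i`, `G*(Xᵢ) = Xᵢ + g` where `g` does not involve
`Xᵢ`, and `G*(Xⱼ) = Xⱼ` for `j ≠ i`. -/
def IsElementary {k : Type*} [Field k] {n : ℕ} (G : PolyAut k n) : Prop :=
  ∃ i : Fin n, ∃ g : MvPolynomial (Fin n) k, i ∉ g.vars ∧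
    G (X i) = X i + g ∧ ∀ j : Fin n, j ≠ i → G (X j) = X j

/-- `G` is affine if each `G*(Xᵢ)` has total degree at most 1. -/
def IsAffine {k : Type*} [Field k] {n : ℕ} (G : PolyAut k n) : Prop :=
  ∀ i : Fin n, (G (X i)).totalDegree ≤ 1

/-- `G` is tame if it lies in the subgroup of `GAₙ` generated by the affine and the
elementary automorphisms. -/
def IsTame {k : Type*} [Field k] {n : ℕ} (G : PolyAut k n) : Prop :=
  G ∈ Subgroup.closure {H : PolyAut k n | IsAffine H ∨ IsElementary H}

/-!
Let `D` be a diagonal automorphism with multipliers `cᵢ`, and let `E` add a polynomial `h`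
to `Xᵢ`. Then `⁅D, E⁆` adds `cᵢ⁻¹ D(h) - h` to `Xᵢ`, and on a monomial `h = a X^α` without `Xᵢ`
this is multiplication by `cᵢ⁻¹ c^α - 1`. For `cⱼ = t`, `cᵢ = t⁻¹` and all other multipliers `1`,
the automorphism `D` is jacobian and the factor is `t ^ (αⱼ + 1) - 1`, which is nonzero for a
suitable `t` in an infinite field. Hence the elementary automorphisms are generated by commutators
`⁅D, E⁆`, all of which lie in `N`.

On the other hand, by Gaussian elimination the tame group is generated by diagonal and elementary
automorphisms, and diagonal automorphisms normalize the elementary group. So a tame `F` is a product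
of an element of the elementary group, which is jacobian and lies in `N`, and of a diagonal
automorphism, which is jacobian when `F` is.
-/

section Diagonal

variable {σ R : Type*} [CommSemiring R]

theorem algEquiv_ext_X {F G : MvPolynomial σ R ≃ₐ[R] MvPolynomial σ R}
    (h : ∀ i, F (X i) = G (X i)) : F = G :=
  AlgEquiv.coe_toAlgHom_injective (algHom_ext h)

theorem apply_eq_self_of_mem_supported {φ : MvPolynomial σ R →ₐ[R] MvPolynomial σ R} {s : Set σ}
    (hφ : ∀ j ∈ s, φ (X j) = X j) {p : MvPolynomial σ R} (hp : p ∈ supported R s) : φ p = p := by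
  have hle : supported R s ≤ AlgHom.equalizer φ (AlgHom.id R _) :=
    Algebra.adjoin_le (Set.forall_mem_image.2 hφ)
  exact hle hp

theorem mem_supported_compl_singleton {i : σ} {p : MvPolynomial σ R} :
    p ∈ supported R ({i}ᶜ : Set σ) ↔ i ∉ p.vars := by
  rw [mem_supported, Set.subset_compl_singleton_iff, Finset.mem_coe]

theorem monomial_mem_supported {s : Set σ} {α : σ →₀ ℕ} (hα : ↑α.support ⊆ s) (a : R) :
    monomial α a ∈ supported R s := by
  rw [mem_supported]
  intro i hi
  obtain ⟨β, hβ, hiβ⟩ := (mem_vars_iff_mem_support i).1 hi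
  rw [Finset.mem_singleton.1 (support_monomial_subset hβ)] at hiβ
  exact hα hiβ

theorem supported_induction {s : Set σ} {motive : supported R s → Prop} (zero : motive 0)
    (add : ∀ p q, motive p → motive q → motive (p + q))
    (monomial : ∀ α a (hα : ↑α.support ⊆ s), motive ⟨monomial α a, monomial_mem_supported hα a⟩)
    (p : supported R s) : motive p := by
  have hsupp (α : p.1.support) : (α.1.support : Set σ) ⊆ s := fun i hi =>
    mem_supported.1 p.2 ((mem_vars_iff_mem_support i).2 ⟨α, α.2, hi⟩)
  have hsum : p = ∑ α : p.1.support,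
      ⟨MvPolynomial.monomial α.1 (coeff α.1 p.1), monomial_mem_supported (hsupp α) _⟩ := by
    refine Subtype.ext ?_
    rw [AddSubmonoidClass.coe_finsetSum,
      Finset.sum_coe_sort p.1.support fun α => MvPolynomial.monomial α (coeff α p.1)]
    exact p.1.as_sum
  rw [hsum]
  exact Finset.sum_induction _ motive add zero fun α _ => monomial α _ (hsupp α)

/-- The diagonal automorphism `Xᵢ ↦ cᵢ Xᵢ`, as a homomorphism from the torus. -/
noncomputable def diagonalAut : (σ → Rˣ) →* (MvPolynomial σ R ≃ₐ[R] MvPolynomial σ R) where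
  toFun c := AlgEquiv.ofAlgHom (aeval fun i => c i • X i) (aeval fun i => (c i)⁻¹ • X i)
    (algHom_ext fun i => by simp [Units.smul_def, smul_smul])
    (algHom_ext fun i => by simp [Units.smul_def, smul_smul])
  map_one' := algEquiv_ext_X fun i => by simp
  map_mul' c d := algEquiv_ext_X fun i => by simp [Units.smul_def, smul_smul, mul_comm]

@[simp]
theorem diagonalAut_X (c : σ → Rˣ) (i : σ) :
    diagonalAut c (X i : MvPolynomial σ R) = (c i : R) • X i := by
  simp [diagonalAut, Units.smul_def]

theorem diagonalAut_monomial (c : σ → Rˣ) (α : σ →₀ ℕ) (a : R) :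
    diagonalAut c (monomial α a) = (α.prod fun i m => (c i : R) ^ m) • monomial α a := by
  have hC : diagonalAut c (C a : MvPolynomial σ R) = C a := (diagonalAut c).commutes a
  simp only [monomial_eq, map_mul, hC, Finsupp.prod, map_prod, map_pow, diagonalAut_X, smul_pow,
    Finset.prod_smul, mul_smul_comm]

theorem diagonalAut_mem_supported (c : σ → Rˣ) {s : Set σ} {p : MvPolynomial σ R}
    (hp : p ∈ supported R s) : diagonalAut c p ∈ supported R s := by
  have hle : supported R s ≤ (supported R s).comap (diagonalAut c : _ →ₐ[R] _) := by
    refine Algebra.adjoin_le (Set.forall_mem_image.2 fun j hj => ?_)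
    have hX : (X j : MvPolynomial σ R) ∈ supported R s :=
      Algebra.subset_adjoin (Set.mem_image_of_mem X hj)
    simpa using Subalgebra.smul_mem _ hX (c j : R)
  exact hle hp

variable (σ R) in
/-- The group of diagonal automorphisms of the polynomial ring. -/
noncomputable def diagonalSubgroup : Subgroup (MvPolynomial σ R ≃ₐ[R] MvPolynomial σ R) :=
  diagonalAut.range

theorem diagonalAut_mem_diagonalSubgroup (c : σ → Rˣ) : diagonalAut c ∈ diagonalSubgroup σ R :=
  ⟨c, rfl⟩

end Diagonal

section Elementary

open scoped commutatorElement

variable {σ R : Type*} [CommRing R] [DecidableEq σ]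

theorem aeval_update_X_comp_aeval_update_X (i : σ) (g h : supported R ({i}ᶜ : Set σ)) :
    (aeval (Function.update X i (X i + (g : MvPolynomial σ R)))).comp
      (aeval (Function.update X i (X i + (h : MvPolynomial σ R)))) =
    aeval (Function.update X i
      (X i + ((g + h : supported R ({i}ᶜ : Set σ)) : MvPolynomial σ R))) := by
  refine algHom_ext fun j => ?_
  rcases eq_or_ne j i with rfl | hj
  · have hfix : aeval (Function.update X j (X j + (g : MvPolynomial σ R))) (h : MvPolynomial σ R) =
        (h : MvPolynomial σ R) :=
      apply_eq_self_of_mem_supported (fun l hl => by simp [Function.update_of_ne hl]) h.2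
    simp only [AlgHom.comp_apply, aeval_X, Function.update_self, map_add, hfix, Subalgebra.coe_add,
      add_assoc]
  · simp [Function.update_of_ne hj]

/-- The elementary automorphism `Xᵢ ↦ Xᵢ + g` fixing the other variables, where `g` is a polynomial
in the variables other than `Xᵢ`. -/
noncomputable def elementaryAut (i : σ) (g : supported R ({i}ᶜ : Set σ)) :
    MvPolynomial σ R ≃ₐ[R] MvPolynomial σ R :=
  AlgEquiv.ofAlgHom (aeval (Function.update X i (X i + (g : MvPolynomial σ R))))
    (aeval (Function.update X i (X i + ((-g : supported R ({i}ᶜ : Set σ)) : MvPolynomial σ R))))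
    (by rw [aeval_update_X_comp_aeval_update_X]; simp)
    (by rw [aeval_update_X_comp_aeval_update_X]; simp)

@[simp]
theorem elementaryAut_X_self (i : σ) (g : supported R ({i}ᶜ : Set σ)) :
    elementaryAut i g (X i) = X i + (g : MvPolynomial σ R) := by
  simp [elementaryAut]

theorem elementaryAut_X_of_ne {i j : σ} (hj : j ≠ i) (g : supported R ({i}ᶜ : Set σ)) :
    elementaryAut i g (X j) = X j := by
  simp [elementaryAut, hj]

@[simp]
theorem elementaryAut_zero (i : σ) : elementaryAut i (0 : supported R ({i}ᶜ : Set σ)) = 1 :=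
  algEquiv_ext_X fun j => by simp [elementaryAut]

theorem elementaryAut_add (i : σ) (g h : supported R ({i}ᶜ : Set σ)) :
    elementaryAut i (g + h) = elementaryAut i g * elementaryAut i h :=
  AlgEquiv.coe_toAlgHom_injective (aeval_update_X_comp_aeval_update_X i g h).symm

theorem elementaryAut_neg (i : σ) (g : supported R ({i}ᶜ : Set σ)) :
    elementaryAut i (-g) = (elementaryAut i g)⁻¹ :=
  eq_inv_of_mul_eq_one_left (by rw [← elementaryAut_add]; simp)

theorem diagonalAut_conj_elementaryAut (c : σ → Rˣ) (i : σ) {g h : supported R ({i}ᶜ : Set σ)}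
    (hgh : diagonalAut c (g : MvPolynomial σ R) = (c i : R) • (h : MvPolynomial σ R)) :
    diagonalAut c * elementaryAut i g * (diagonalAut c)⁻¹ = elementaryAut i h := by
  rw [mul_inv_eq_iff_eq_mul]
  refine algEquiv_ext_X fun j => ?_
  rcases eq_or_ne j i with rfl | hj
  · simp [hgh]
  · simp [elementaryAut_X_of_ne hj]

theorem elementaryAut_eq_commutator {c : σ → Rˣ} {i : σ} {g : supported R ({i}ᶜ : Set σ)} {u : Rˣ}
    (hg : diagonalAut c (g : MvPolynomial σ R) =
      ((c i : R) * (1 + (u : R))) • (g : MvPolynomial σ R)) :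
    elementaryAut i g = ⁅diagonalAut c, elementaryAut i ((↑u⁻¹ : R) • g)⁆ := by
  have hconj : diagonalAut c * elementaryAut i ((↑u⁻¹ : R) • g) * (diagonalAut c)⁻¹ =
      elementaryAut i (g + (↑u⁻¹ : R) • g) := by
    refine diagonalAut_conj_elementaryAut c i ?_
    simp only [Subalgebra.coe_smul, Subalgebra.coe_add, map_smul, hg, smul_add, smul_smul,
      ← add_smul]
    congr 1
    linear_combination (c i : R) * u.inv_mul
  rw [commutatorElement_def, hconj, elementaryAut_add, mul_inv_cancel_right]

variable (σ R) in
/-- The group generated by the elementary automorphisms of the polynomial ring. -/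
noncomputable def elementarySubgroup : Subgroup (MvPolynomial σ R ≃ₐ[R] MvPolynomial σ R) :=
  Subgroup.closure (⋃ i, Set.range (elementaryAut i))

theorem elementaryAut_mem_elementarySubgroup (i : σ) (g : supported R ({i}ᶜ : Set σ)) :
    elementaryAut i g ∈ elementarySubgroup σ R :=
  Subgroup.subset_closure (Set.mem_iUnion_of_mem i ⟨g, rfl⟩)

theorem elementarySubgroup_le {N : Subgroup (MvPolynomial σ R ≃ₐ[R] MvPolynomial σ R)} :
    elementarySubgroup σ R ≤ N ↔ ∀ i g, elementaryAut i g ∈ N := by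
  simp [elementarySubgroup, Subgroup.closure_le, Set.iUnion_subset_iff, Set.range_subset_iff]

theorem diagonalSubgroup_le_normalizer :
    diagonalSubgroup σ R ≤ Subgroup.normalizer (elementarySubgroup σ R) := by
  refine Subgroup.le_normalizer_closure_iff.2 ?_
  rintro _ ⟨c, rfl⟩ _ hE
  obtain ⟨i, g, rfl⟩ := Set.mem_iUnion.1 hE
  have hconj := diagonalAut_conj_elementaryAut c i (g := g)
    (h := (↑(c i)⁻¹ : R) • ⟨diagonalAut c g, diagonalAut_mem_supported c g.2⟩) (by simp [smul_smul])
  rw [hconj]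
  exact elementaryAut_mem_elementarySubgroup i _

end Elementary

section Jacobian

theorem derivation_comp_algHom {σ R A : Type*} [CommSemiring R] [CommSemiring A] [Algebra R A]
    [Fintype σ] (d : Derivation R A A) (φ : MvPolynomial σ R →ₐ[R] A) (p : MvPolynomial σ R) :
    d (φ p) = ∑ l, φ (pderiv l p) * d (φ (X l)) := by
  classical
  induction p using MvPolynomial.induction_on with
  | C a => simp [← algebraMap_eq]
  | add p q hp hq => simp only [map_add, hp, hq, add_mul, Finset.sum_add_distrib]
  | mul_X p i hp =>
    have hX : ∑ l, φ (p * pderiv l (X i)) * d (φ (X l)) = φ p * d (φ (X i)) := by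
      rw [Finset.sum_eq_single i (fun l _ hl => by simp [pderiv_X_of_ne hl.symm]) (by simp)]
      simp
    have hp' : ∑ l, φ (X i * pderiv l p) * d (φ (X l)) = φ (X i) * d (φ p) := by
      simp only [hp, map_mul, mul_assoc, Finset.mul_sum]
    simp only [Derivation.leibniz, smul_eq_mul, map_add, add_mul, Finset.sum_add_distrib, hX, hp']
    rw [map_mul, d.leibniz, smul_eq_mul, smul_eq_mul]

variable {σ R : Type*} [CommRing R]

/-- The jacobian matrix `(∂F(Xᵢ)/∂Xⱼ)` of an automorphism of the polynomial ring. -/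
noncomputable def jacobianMatrix (F : MvPolynomial σ R ≃ₐ[R] MvPolynomial σ R) :
    Matrix σ σ (MvPolynomial σ R) :=
  Matrix.of fun i j => pderiv j (F (X i))

theorem jacobianMatrix_one [DecidableEq σ] :
    jacobianMatrix (1 : MvPolynomial σ R ≃ₐ[R] MvPolynomial σ R) = 1 := by
  ext1 i j
  simp [jacobianMatrix, Matrix.one_apply, pderiv_X, Pi.single_apply]

theorem jacobianMatrix_mul [Fintype σ] (F G : MvPolynomial σ R ≃ₐ[R] MvPolynomial σ R) :
    jacobianMatrix (F * G) = (jacobianMatrix G).map F * jacobianMatrix F := by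
  ext1 i j
  simpa [jacobianMatrix, Matrix.mul_apply] using
    derivation_comp_algHom (pderiv j) (F : MvPolynomial σ R →ₐ[R] MvPolynomial σ R) (G (X i))

variable [Fintype σ] [DecidableEq σ]

theorem det_jacobianMatrix_mul (F G : MvPolynomial σ R ≃ₐ[R] MvPolynomial σ R) :
    (jacobianMatrix (F * G)).det = F (jacobianMatrix G).det * (jacobianMatrix F).det := by
  rw [jacobianMatrix_mul, Matrix.det_mul, AlgEquiv.map_det]
  rfl

theorem map_det_jacobianMatrix_inv_mul (F : MvPolynomial σ R ≃ₐ[R] MvPolynomial σ R) :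
    F (jacobianMatrix F⁻¹).det * (jacobianMatrix F).det = 1 := by
  rw [← det_jacobianMatrix_mul, mul_inv_cancel, jacobianMatrix_one, Matrix.det_one]

variable (σ R) in
/-- The group `Jₙ` of automorphisms of the polynomial ring with jacobian determinant `1`. -/
noncomputable def jacobianSubgroup : Subgroup (MvPolynomial σ R ≃ₐ[R] MvPolynomial σ R) where
  carrier := {F | (jacobianMatrix F).det = 1}
  one_mem' := by simp [jacobianMatrix_one]
  mul_mem' {F G} hF hG := by
    rw [Set.mem_ofPred_eq] at hF hG ⊢
    rw [det_jacobianMatrix_mul, hF, hG, map_one, mul_one]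
  inv_mem' {F} hF := by
    rw [Set.mem_ofPred_eq] at hF ⊢
    have hinv := map_det_jacobianMatrix_inv_mul F
    rw [hF, mul_one] at hinv
    exact F.injective (hinv.trans (map_one F).symm)

theorem mem_jacobianSubgroup {F : MvPolynomial σ R ≃ₐ[R] MvPolynomial σ R} :
    F ∈ jacobianSubgroup σ R ↔ (jacobianMatrix F).det = 1 :=
  Iff.rfl

theorem elementaryAut_mem_jacobianSubgroup (i : σ) (g : supported R ({i}ᶜ : Set σ)) :
    elementaryAut i g ∈ jacobianSubgroup σ R := by
  have hrankOne : jacobianMatrix (elementaryAut i g) =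
      1 + Matrix.replicateCol Unit (Pi.single i (1 : MvPolynomial σ R)) *
        Matrix.replicateRow Unit fun j => pderiv j (g : MvPolynomial σ R) := by
    ext1 l j
    rcases eq_or_ne l i with rfl | hl
    · simp [jacobianMatrix, Matrix.mul_apply, Matrix.one_apply, pderiv_X, Pi.single_apply]
    · simp [jacobianMatrix, elementaryAut_X_of_ne hl, Matrix.mul_apply, Matrix.one_apply, pderiv_X,
        Pi.single_apply, hl]
  rw [mem_jacobianSubgroup, hrankOne, Matrix.det_one_add_replicateCol_mul_replicateRow]
  simp [pderiv_eq_zero_of_notMem_vars (mem_supported_compl_singleton.1 g.2)]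

theorem det_jacobianMatrix_diagonalAut (c : σ → Rˣ) :
    (jacobianMatrix (diagonalAut c : MvPolynomial σ R ≃ₐ[R] MvPolynomial σ R)).det =
      C (∏ i, (c i : R)) := by
  have hdiag : jacobianMatrix (diagonalAut c : MvPolynomial σ R ≃ₐ[R] MvPolynomial σ R) =
      Matrix.diagonal fun i => C (c i : R) := by
    ext1 i j
    simp [jacobianMatrix, Matrix.diagonal_apply, pderiv_X, Pi.single_apply, smul_eq_C_mul]
  rw [hdiag, Matrix.det_diagonal, map_prod]

theorem elementarySubgroup_le_jacobianSubgroup :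
    elementarySubgroup σ R ≤ jacobianSubgroup σ R :=
  elementarySubgroup_le.2 elementaryAut_mem_jacobianSubgroup

end Jacobian

section Commutators

theorem exists_units_pow_ne_one {k : Type*} [Field k] [Infinite k] {m : ℕ} (hm : 0 < m) :
    ∃ t : kˣ, (t : k) ^ m ≠ 1 := by
  classical
  obtain ⟨t, ht⟩ := Infinite.exists_notMem_finset (insert 0 (Polynomial.nthRootsFinset m (1 : k)))
  rw [Finset.mem_insert, Polynomial.mem_nthRootsFinset hm, not_or] at ht
  exact ⟨Units.mk0 t ht.1, ht.2⟩

variable {σ k : Type*} [Fintype σ] [DecidableEq σ]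

theorem diagonalAut_mulSingle_mem_inf {R : Type*} [CommRing R] (i j : σ) (t : Rˣ) :
    diagonalAut (Pi.mulSingle j t * Pi.mulSingle i t⁻¹) ∈
      diagonalSubgroup σ R ⊓ jacobianSubgroup σ R := by
  refine Subgroup.mem_inf.2 ⟨diagonalAut_mem_diagonalSubgroup _, ?_⟩
  have hprod : ∏ l, (Pi.mulSingle j t * Pi.mulSingle i t⁻¹ : σ → Rˣ) l = 1 := by
    simp [Finset.prod_mul_distrib]
  rw [mem_jacobianSubgroup, det_jacobianMatrix_diagonalAut, ← Units.coe_prod, hprod]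
  simp

theorem elementaryAut_monomial_mem_commutator [Field k] [Infinite k] {i j : σ} (hij : j ≠ i)
    {α : σ →₀ ℕ} (a : k) (hα : ↑α.support ⊆ ({i}ᶜ : Set σ)) :
    elementaryAut i ⟨monomial α a, monomial_mem_supported hα a⟩ ∈
      ⁅diagonalSubgroup σ k ⊓ jacobianSubgroup σ k, elementarySubgroup σ k⁆ := by
  obtain ⟨t, ht⟩ := exists_units_pow_ne_one (k := k) (Nat.add_one_pos (α j))
  obtain ⟨u, hu⟩ : ∃ u : kˣ, (u : k) = (t : k) ^ (α j + 1) - 1 :=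
    ⟨Units.mk0 _ (sub_ne_zero.2 ht), rfl⟩
  obtain ⟨c, hc⟩ : ∃ c : σ → kˣ, c = Pi.mulSingle j t * Pi.mulSingle i t⁻¹ := ⟨_, rfl⟩
  have hweight : (α.prod fun l m => (c l : k) ^ m) = (t : k) ^ α j := by
    rw [Finsupp.prod_eq_single j]
    · simp [hc, hij]
    · intro l hl hlj
      have hli : l ≠ i := hα (Finsupp.mem_support_iff.2 hl)
      simp [hc, hlj, hli]
    · simp
  have hci : (c i : k) = (t : k)⁻¹ := by simp [hc, hij.symm]
  have heigen : diagonalAut c (monomial α a) = ((c i : k) * (1 + (u : k))) • monomial α a := by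
    rw [diagonalAut_monomial, hweight, hci, hu]
    congr 1
    field_simp
    ring
  rw [elementaryAut_eq_commutator (g := ⟨monomial α a, monomial_mem_supported hα a⟩) heigen]
  exact Subgroup.commutator_mem_commutator (hc ▸ diagonalAut_mulSingle_mem_inf i j t)
    (elementaryAut_mem_elementarySubgroup i _)

theorem elementarySubgroup_le_commutator [Field k] [Infinite k] [Nontrivial σ] :
    elementarySubgroup σ k ≤
      ⁅diagonalSubgroup σ k ⊓ jacobianSubgroup σ k, elementarySubgroup σ k⁆ := by
  refine elementarySubgroup_le.2 fun i g => ?_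
  obtain ⟨j, hij⟩ := exists_ne i
  induction g using supported_induction with
  | zero => simpa only [elementaryAut_zero] using one_mem _
  | add p q hp hq => simpa only [elementaryAut_add] using mul_mem hp hq
  | monomial α a hα => exact elementaryAut_monomial_mem_commutator hij a hα

end Commutators

section Affine

variable {σ R : Type*} [CommRing R]

theorem exists_eq_sum_smul_X_add_C [Fintype σ] {p : MvPolynomial σ R} (hp : p.totalDegree ≤ 1) :
    ∃ (a : σ → R) (b : R), p = ∑ j, a j • X j + C b := by
  have hlinear : homogeneousComponent 1 p ∈ Submodule.span R (Set.range X) :=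
    homogeneousSubmodule_one_eq_span_X (σ := σ) (R := R) ▸ homogeneousComponent_mem 1 p
  obtain ⟨a, ha⟩ := (Submodule.mem_span_range_iff_exists_fun R).1 hlinear
  refine ⟨a, coeff 0 p, ?_⟩
  rw [ha, ← homogeneousComponent_zero]
  rcases Nat.le_one_iff_eq_zero_or_eq_one.1 hp with h | h
  · rw [homogeneousComponent_eq_zero 1 p (by omega), zero_add]
    simpa [h] using (sum_homogeneousComponent p).symm
  · simpa [h, Finset.sum_range_succ, add_comm] using (sum_homogeneousComponent p).symm

variable [DecidableEq σ]

theorem toMvPolynomial_diagonal [Fintype σ] (d : σ → R) (i : σ) :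
    (Matrix.diagonal d).toMvPolynomial i = d i • X i := by
  rw [Matrix.toMvPolynomial, Finset.sum_eq_single i]
  · simp [smul_eq_C_mul, C_mul_X_eq_monomial]
  · intro j _ hj
    simp [Matrix.diagonal_apply_ne _ hj.symm]
  · simp

theorem toMvPolynomial_transvection [Fintype σ] (i j l : σ) (c : R) :
    (Matrix.transvection i j c).toMvPolynomial l =
      X l + if l = i then monomial (Finsupp.single j 1) c else 0 := by
  rw [Matrix.transvection, Matrix.toMvPolynomial_add, Matrix.toMvPolynomial_one, Pi.add_apply,
    Matrix.toMvPolynomial, Finset.sum_eq_single j]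
  · congr 1
    split_ifs with h
    · simp [h]
    · simp [Matrix.single_apply_of_row_ne (Ne.symm h)]
  · intro m _ hm
    simp [Matrix.single_apply_of_col_ne _ _ hm.symm]
  · simp

theorem exists_mem_elementarySubgroup_translation [Finite σ] (b : σ → R) :
    ∃ τ ∈ elementarySubgroup σ R, ∀ i, τ (X i) = X i + C (b i) := by
  cases nonempty_fintype σ
  rw [← Finset.univ_sum_single b]
  refine Finset.sum_induction _
    (fun b : σ → R => ∃ τ ∈ elementarySubgroup σ R, ∀ i, τ (X i) = X i + C (b i)) ?_
    ⟨1, one_mem _, by simp⟩ fun i _ => ?_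
  · rintro b d ⟨τ, hτ, hτX⟩ ⟨υ, hυ, hυX⟩
    refine ⟨τ * υ, mul_mem hτ hυ, fun i => ?_⟩
    have hC : τ (C (d i)) = C (d i) := τ.commutes _
    rw [AlgEquiv.mul_apply, hυX, map_add, hτX, hC, Pi.add_apply, C_add, add_assoc]
  · refine ⟨elementaryAut i ⟨C (b i), Subalgebra.algebraMap_mem _ _⟩,
      elementaryAut_mem_elementarySubgroup i _, fun j => ?_⟩
    rcases eq_or_ne j i with rfl | hj
    · simp
    · simp [elementaryAut_X_of_ne hj, hj]

variable {k : Type*} [Field k]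

theorem exists_apply_X_eq_toMvPolynomial [Fintype σ] {A : Matrix σ σ k} (hA : A.det ≠ 0) :
    ∃ L ∈ elementarySubgroup σ k ⊔ diagonalSubgroup σ k, ∀ i, L (X i) = A.toMvPolynomial i := by
  refine Matrix.diagonal_transvection_induction_of_det_ne_zero
    (fun A => ∃ L ∈ elementarySubgroup σ k ⊔ diagonalSubgroup σ k,
      ∀ i, L (X i) = A.toMvPolynomial i) A hA ?_ ?_ ?_
  · intro c hc
    rw [Matrix.det_diagonal, Finset.prod_ne_zero_iff] at hc
    refine ⟨diagonalAut fun i => Units.mk0 (c i) (hc i (Finset.mem_univ i)),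
      Subgroup.mem_sup_right (diagonalAut_mem_diagonalSubgroup _), fun i => ?_⟩
    rw [diagonalAut_X, toMvPolynomial_diagonal, Units.val_mk0]
  · rintro ⟨i, j, hij, c⟩
    have hsupp : monomial (Finsupp.single j 1) c ∈ supported k ({i}ᶜ : Set σ) :=
      monomial_mem_supported (fun l hl => by
        rw [Finset.mem_singleton.1 (Finsupp.support_single_subset hl)]
        exact hij.symm) c
    refine ⟨elementaryAut i ⟨_, hsupp⟩,
      Subgroup.mem_sup_left (elementaryAut_mem_elementarySubgroup i _), fun l => ?_⟩
    rw [Matrix.TransvectionStruct.toMatrix_mk, toMvPolynomial_transvection]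
    rcases eq_or_ne l i with rfl | hl
    · simp
    · simp [elementaryAut_X_of_ne hl, hl]
  · rintro A B _ _ ⟨L, hL, hLX⟩ ⟨M, hM, hMX⟩
    refine ⟨M * L, mul_mem hM hL, fun i => ?_⟩
    have hbind : (M : MvPolynomial σ k →ₐ[k] MvPolynomial σ k) = bind₁ B.toMvPolynomial :=
      algHom_ext fun j => by simp [hMX]
    rw [AlgEquiv.mul_apply, hLX, Matrix.toMvPolynomial_mul, ← hbind]
    rfl

theorem mem_elementary_sup_diagonal_of_totalDegree_le_one [Finite σ]
    {F : MvPolynomial σ k ≃ₐ[k] MvPolynomial σ k} (hF : ∀ i, (F (X i)).totalDegree ≤ 1) :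
    F ∈ elementarySubgroup σ k ⊔ diagonalSubgroup σ k := by
  cases nonempty_fintype σ
  choose A b hAb using fun i => exists_eq_sum_smul_X_add_C (hF i)
  have hjac : jacobianMatrix F = (Matrix.of A).map C := by
    ext1 i j
    simp [jacobianMatrix, hAb, pderiv_X, Pi.single_apply, smul_eq_C_mul]
  have hdet : (Matrix.of A).det ≠ 0 := by
    intro h
    have hone := map_det_jacobianMatrix_inv_mul F
    rw [hjac, ← RingHom.mapMatrix_apply, ← RingHom.map_det, h, map_zero, mul_zero] at hone
    exact zero_ne_one hone
  obtain ⟨L, hL, hLX⟩ := exists_apply_X_eq_toMvPolynomial hdet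
  obtain ⟨τ, hτ, hτX⟩ := exists_mem_elementarySubgroup_translation b
  have hFL : F = L * τ := algEquiv_ext_X fun i => by
    have hC : L (C (b i)) = C (b i) := L.commutes _
    simp [hτX, hLX, hC, hAb, Matrix.toMvPolynomial, smul_eq_C_mul, C_mul_X_eq_monomial]
  rw [hFL]
  exact mul_mem hL (Subgroup.mem_sup_left hτ)

end Affine

section Tame

variable {k : Type*} [Field k] {n : ℕ}

theorem isElementary_iff {E : PolyAut k n} : IsElementary E ↔ ∃ i g, elementaryAut i g = E := by
  constructor
  · rintro ⟨i, g, hg, hEi, hEj⟩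
    refine ⟨i, ⟨g, mem_supported_compl_singleton.2 hg⟩, algEquiv_ext_X fun j => ?_⟩
    rcases eq_or_ne j i with rfl | hj
    · rw [elementaryAut_X_self, hEi]
    · rw [elementaryAut_X_of_ne hj, hEj j hj]
  · rintro ⟨i, g, rfl⟩
    exact ⟨i, g, mem_supported_compl_singleton.1 g.2, elementaryAut_X_self i g,
      fun j hj => elementaryAut_X_of_ne hj g⟩

theorem isDiagonal_of_mem_diagonalSubgroup {D : PolyAut k n} (hD : D ∈ diagonalSubgroup (Fin n) k) :
    IsDiagonal D := by
  obtain ⟨c, rfl⟩ := hD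
  exact fun i => ⟨c i, (c i).ne_zero, by rw [diagonalAut_X, smul_eq_C_mul]⟩

theorem IsElementary.isJacobian {E : PolyAut k n} (hE : IsElementary E) : IsJacobian E := by
  obtain ⟨i, g, rfl⟩ := isElementary_iff.1 hE
  exact elementaryAut_mem_jacobianSubgroup i g

theorem IsTame.exists_mul_eq {F : PolyAut k n} (hF : IsTame F) :
    ∃ E ∈ elementarySubgroup (Fin n) k, ∃ D ∈ diagonalSubgroup (Fin n) k, E * D = F := by
  have hle : Subgroup.closure {H : PolyAut k n | IsAffine H ∨ IsElementary H} ≤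
      elementarySubgroup (Fin n) k ⊔ diagonalSubgroup (Fin n) k := by
    refine (Subgroup.closure_le _).2 ?_
    rintro H (hH | hH)
    · exact mem_elementary_sup_diagonal_of_totalDegree_le_one hH
    · obtain ⟨i, g, rfl⟩ := isElementary_iff.1 hH
      exact Subgroup.mem_sup_left (elementaryAut_mem_elementarySubgroup i g)
  have hmem := SetLike.mem_coe.2 (hle hF)
  rwa [Subgroup.coe_mul_of_right_le_normalizer_left _ _ diagonalSubgroup_le_normalizer,
    Set.mem_mul] at hmem

theorem elementarySubgroup_le_normalizer {N : Subgroup (PolyAut k n)}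
    (hN : ∀ G ∈ N, ∀ φ : PolyAut k n, IsElementary φ → φ⁻¹ * G * φ ∈ N) :
    elementarySubgroup (Fin n) k ≤ Subgroup.normalizer N := by
  refine elementarySubgroup_le.2 fun i g => Subgroup.mem_normalizer_iff''.2 fun G => ?_
  refine ⟨fun hG => hN G hG _ (isElementary_iff.2 ⟨i, g, rfl⟩), fun hG => ?_⟩
  have hconj := hN _ hG _ (isElementary_iff.2 ⟨i, -g, rfl⟩)
  rw [elementaryAut_neg] at hconj
  simpa only [inv_inv, mul_assoc, mul_inv_cancel_left, mul_inv_cancel, mul_one] using hconj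

end Tame

theorem tame_jacobian_mem_general (k : Type*) [Field k] [Infinite k] (n : ℕ) (hn : 2 ≤ n)
    (N : Subgroup (PolyAut k n))
    (hnormal : ∀ G ∈ N, ∀ φ : PolyAut k n, IsElementary φ → φ⁻¹ * G * φ ∈ N)
    (hdiag : ∀ D : PolyAut k n, IsDiagonal D → IsJacobian D → D ∈ N) :
    ∀ F : PolyAut k n, IsTame F → IsJacobian F → F ∈ N := by
  intro F hF hFjac
  have : Nontrivial (Fin n) := Fin.nontrivial_iff_two_le.2 hn
  have hSD : diagonalSubgroup (Fin n) k ⊓ jacobianSubgroup (Fin n) k ≤ N := fun D hD =>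
    hdiag D (isDiagonal_of_mem_diagonalSubgroup hD.1) hD.2
  have hEN : ⁅N, elementarySubgroup (Fin n) k⁆ ≤ N :=
    Subgroup.le_normalizer_iff_commutator_le_left.1 (elementarySubgroup_le_normalizer hnormal)
  have hE : elementarySubgroup (Fin n) k ≤ N :=
    elementarySubgroup_le_commutator.trans ((Subgroup.commutator_mono hSD le_rfl).trans hEN)
  obtain ⟨E, hEmem, D, hD, rfl⟩ := hF.exists_mul_eq
  have hDjac : D ∈ jacobianSubgroup (Fin n) k :=
    (mul_mem_cancel_left (elementarySubgroup_le_jacobianSubgroup hEmem)).1 hFjac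
  exact mul_mem (hE hEmem) (hSD ⟨hD, hDjac⟩)

/-- Let `N` be a subgroup of `GAₙ` consisting of jacobian automorphisms which is normal
in the group of jacobian automorphisms (i.e. `φ∘G∘φ⁻¹ ∈ N` for every `G ∈ N` and every
jacobian `φ`), and suppose `N` contains every diagonal automorphism with jacobian
determinant 1.  Then every tame jacobian automorphism belongs to `N`. -/
theorem tame_jacobian_mem (k : Type*) [Field k] [CharZero k] (n : ℕ) (hn : 2 ≤ n)
    (N : Subgroup (PolyAut k n))
    (hjac : ∀ G ∈ N, IsJacobian G)
    (hnormal : ∀ G ∈ N, ∀ φ : PolyAut k n, IsJacobian φ → φ⁻¹ * G * φ ∈ N)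
    (hdiag : ∀ D : PolyAut k n, IsDiagonal D → IsJacobian D → D ∈ N) :
    ∀ F : PolyAut k n, IsTame F → IsJacobian F → F ∈ N :=
  tame_jacobian_mem_general k n hn N (fun G hG φ hφ => hnormal G hG φ hφ.isJacobian) hdiag
end

section
/- Let σ := Y² + XZ ∈ k[X,Y,Z], let φ be the k-algebra endomorphism of k[X,Y,Z] with φ(X) = X − 2σY − σ²Z, φ(Y) = Y + σZ, φ(Z) = Z (the Nagata map), and let λ be the k-algebra endomorphism with λ(X) = ¼X, λ(Y) = ½Y, λ(Z) = Z. Then φ∘λ = λ∘φ∘φ. Equivalently, for the corresponding polynomial automorphisms F and L one has F = (F⁻¹∘L∘F)∘L⁻¹. -/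
open MvPolynomial

/-!
Let `D = -2Y ∂/∂X + Z ∂/∂Y`, which is locally nilpotent and kills `σ = Y² + XZ`. For any polynomial
`p`, the series `φ_p = ∑ pⁿ Dⁿ / n!` is the endomorphism `(X - 2pY - p²Z, Y + pZ, Z)`, and
`φ_p ∘ φ_q = φ_r` with `r = p + φ_p(q)`. The Nagata map is `φ_σ`; as it fixes `σ`, its square is
`φ_{2σ}`. The scaling `λ_c = (c²X, cY, Z)` satisfies `φ_p ∘ λ_c = λ_c ∘ φ_q` as soon as
`λ_c(q) = cp`. For `q = 2σ` and `p = σ` this holds when `2c = 1`, because `λ_c(σ) = c²σ`.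
-/

section NagataShear

variable {R : Type*} [CommRing R]

variable (R) in
/-- The quadratic form `σ = Y² + XZ`, the common invariant of the shears `nagataShear p`. -/
noncomputable def nagataForm : MvPolynomial (Fin 3) R :=
  X 1 ^ 2 + X 0 * X 2

/-- The endomorphism `(X - 2pY - p²Z, Y + pZ, Z)` with multiplier `p`, an arbitrary polynomial;
the Nagata map is the one with multiplier `nagataForm R`. -/
noncomputable def nagataShear (p : MvPolynomial (Fin 3) R) :
    MvPolynomial (Fin 3) R →ₐ[R] MvPolynomial (Fin 3) R :=
  aeval ![X 0 - 2 * p * X 1 - p ^ 2 * X 2, X 1 + p * X 2, X 2]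

/-- The endomorphism `(c²X, cY, Z)`, which scales each variable according to the grading with
weights `2, 1, 0`. -/
noncomputable def weightScaling (c : R) : MvPolynomial (Fin 3) R →ₐ[R] MvPolynomial (Fin 3) R :=
  aeval ![C (c ^ 2) * X 0, C c * X 1, X 2]

theorem nagataShear_X (p : MvPolynomial (Fin 3) R) (i : Fin 3) :
    nagataShear p (X i) = ![X 0 - 2 * p * X 1 - p ^ 2 * X 2, X 1 + p * X 2, X 2] i :=
  aeval_X _ i

theorem weightScaling_X (c : R) (i : Fin 3) :
    weightScaling c (X i) = ![C (c ^ 2) * X 0, C c * X 1, X 2] i :=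
  aeval_X _ i

theorem nagataShear_nagataForm (p : MvPolynomial (Fin 3) R) :
    nagataShear p (nagataForm R) = nagataForm R := by
  simp only [nagataForm, map_add, map_mul, map_pow, nagataShear_X, Matrix.cons_val]
  ring

theorem weightScaling_nagataForm (c : R) :
    weightScaling c (nagataForm R) = C (c ^ 2) * nagataForm R := by
  simp only [nagataForm, map_add, map_mul, map_pow, weightScaling_X, Matrix.cons_val]
  ring

theorem nagataShear_comp_nagataShear (p q : MvPolynomial (Fin 3) R) :
    (nagataShear p).comp (nagataShear q) = nagataShear (p + nagataShear p q) := by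
  refine algHom_ext fun i ↦ ?_
  fin_cases i <;>
    simp only [AlgHom.comp_apply, nagataShear_X, Fin.zero_eta, Fin.mk_one, Fin.reduceFinMk,
      Matrix.cons_val, map_add, map_sub, map_mul, map_pow, map_ofNat] <;>
    ring

theorem nagataShear_comp_weightScaling {c : R} {p q : MvPolynomial (Fin 3) R}
    (h : weightScaling c q = C c * p) :
    (nagataShear p).comp (weightScaling c) = (weightScaling c).comp (nagataShear q) := by
  refine algHom_ext fun i ↦ ?_
  fin_cases i <;>
    simp only [AlgHom.comp_apply, nagataShear_X, weightScaling_X, Fin.zero_eta, Fin.mk_one,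
      Fin.reduceFinMk, Matrix.cons_val, map_add, map_sub, map_mul, map_pow, map_ofNat, algHom_C,
      algebraMap_eq, h] <;>
    ring

end NagataShear

theorem nagata_conjugation_identity_general {R : Type*} [CommRing R] {c : R} (hc : 2 * c = 1)
    (σ : MvPolynomial (Fin 3) R) (hσ : σ = (X 1) ^ 2 + X 0 * X 2)
    (φ lam : MvPolynomial (Fin 3) R →ₐ[R] MvPolynomial (Fin 3) R)
    (hφ : φ = aeval ![X 0 - 2 * σ * X 1 - σ ^ 2 * X 2, X 1 + σ * X 2, X 2])
    (hlam : lam = aeval ![C (c ^ 2) * X 0, C c * X 1, X 2]) :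
    φ.comp lam = lam.comp (φ.comp φ) := by
  obtain rfl : σ = nagataForm R := hσ
  obtain rfl : φ = nagataShear (nagataForm R) := hφ
  obtain rfl : lam = weightScaling c := hlam
  have two_mul_C : (2 : MvPolynomial (Fin 3) R) * C c = 1 := by
    rw [← map_ofNat C 2, ← C_mul, hc, C_1]
  have square : (nagataShear (nagataForm R)).comp (nagataShear (nagataForm R)) =
      nagataShear (2 * nagataForm R) := by
    rw [nagataShear_comp_nagataShear, nagataShear_nagataForm, two_mul]
  have scaling : weightScaling c (2 * nagataForm R) = C c * nagataForm R := by
    rw [map_mul, map_ofNat, weightScaling_nagataForm, C_pow]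
    linear_combination C c * nagataForm R * two_mul_C
  rw [square, nagataShear_comp_weightScaling scaling]

/-- Write `k[X,Y,Z] = MvPolynomial (Fin 3) k` with `X = X 0`, `Y = X 1`, `Z = X 2`;
a triple of polynomials `(G₁,G₂,G₃)` determines the `k`-algebra endomorphism
`aeval ![G₁,G₂,G₃]` sending `X ↦ G₁`, `Y ↦ G₂`, `Z ↦ G₃`; under this correspondence
composition of polynomial maps corresponds to reversed composition of algebra
endomorphisms: `(F∘G)* = G* ∘ F*`.

Let `σ = Y² + XZ`, let `φ` be the Nagata endomorphism `(X − 2σY − σ²Z, Y + σZ, Z)` and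
let `lam` be the endomorphism `(¼X, ½Y, Z)`.  Then `φ ∘ lam = lam ∘ φ ∘ φ`; equivalently,
for the corresponding polynomial automorphisms `F` and `L` one has
`F = (F⁻¹∘L∘F)∘L⁻¹`. -/
theorem nagata_conjugation_identity (k : Type*) [Field k] [CharZero k]
    (σ : MvPolynomial (Fin 3) k) (hσ : σ = (X 1) ^ 2 + X 0 * X 2)
    (φ lam : MvPolynomial (Fin 3) k →ₐ[k] MvPolynomial (Fin 3) k)
    (hφ : φ = aeval ![X 0 - 2 * σ * X 1 - σ ^ 2 * X 2, X 1 + σ * X 2, X 2])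
    (hlam : lam = aeval ![C (1 / 4 : k) * X 0, C (1 / 2 : k) * X 1, X 2]) :
    φ.comp lam = lam.comp (φ.comp φ) := by
  have hc : (2 : k) * (1 / 2) = 1 := by norm_num
  exact nagata_conjugation_identity_general hc σ hσ φ lam hφ (by rw [hlam]; norm_num)
end

section
/- Every tame automorphism of kⁿ belongs to the subgroup 𝓕ₙ of GAₙ generated by the locally finite automorphisms. -/
open MvPolynomial

/-- `G ∈ GAₙ` is locally finite if for every polynomial `f` the `k`-vector subspace
spanned by the iterates `{(G*)^m f : m ∈ ℕ}` is finite dimensional. -/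
def IsLocallyFinite {k : Type*} [Field k] {n : ℕ} (G : PolyAut k n) : Prop :=
  ∀ f : MvPolynomial (Fin n) k,
    FiniteDimensional k (Submodule.span k (Set.range fun m : ℕ => (G ^ m) f))

/-!
An algebra endomorphism sending the variables to polynomials of degree at most `D` multiplies
degrees by at most `D`. Hence an automorphism is locally finite as soon as the iterates of the
variables have bounded degree. This holds for an affine automorphism, which does not raise degrees,
and for an elementary one, since `G*(g) = g` gives `(G*)^m(Xᵢ) = Xᵢ + m g`. So the generators of
the tame group are already locally finite.
-/

theorem totalDegree_algHom_apply_le {σ τ R F : Type*} [CommSemiring R]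
    [FunLike F (MvPolynomial σ R) (MvPolynomial τ R)]
    [AlgHomClass F R (MvPolynomial σ R) (MvPolynomial τ R)] (φ : F) {D : ℕ}
    {p : MvPolynomial σ R} (hφ : ∀ i ∈ p.vars, (φ (X i)).totalDegree ≤ D) :
    (φ p).totalDegree ≤ D * p.totalDegree := by
  have map_monomial (s : σ →₀ ℕ) (c : R) :
      φ (monomial s c) = c • ∏ i ∈ s.support, φ (X i) ^ s i := by
    rw [monomial_eq, ← smul_eq_C_mul, map_smul, Finsupp.prod, map_prod]
    simp only [map_pow]
  conv_lhs => rw [p.as_sum, map_sum]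
  refine totalDegree_finsetSum_le fun s hs ↦ ?_
  have hX : ∀ i ∈ s.support, (φ (X i)).totalDegree ≤ D := fun i hi ↦
    hφ i ((mem_vars_iff_mem_support i).2 ⟨s, hs, hi⟩)
  calc (φ (monomial s (coeff s p))).totalDegree
      ≤ (∏ i ∈ s.support, φ (X i) ^ s i).totalDegree := by
        rw [map_monomial]
        exact totalDegree_smul_le _ _
    _ ≤ ∑ i ∈ s.support, (φ (X i) ^ s i).totalDegree := totalDegree_finsetProd _ _
    _ ≤ ∑ i ∈ s.support, s i * D := Finset.sum_le_sum fun i hi ↦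
        (totalDegree_pow _ _).trans (Nat.mul_le_mul_left _ (hX i hi))
    _ = D * s.sum fun _ e ↦ e := by rw [← Finset.sum_mul, mul_comm, Finsupp.sum]
    _ ≤ D * p.totalDegree := Nat.mul_le_mul_left _ (le_totalDegree hs)

theorem algHom_apply_eq_self_of_vars {σ R F : Type*} [CommSemiring R]
    [FunLike F (MvPolynomial σ R) (MvPolynomial σ R)]
    [AlgHomClass F R (MvPolynomial σ R) (MvPolynomial σ R)] (φ : F)
    {p : MvPolynomial σ R} (hφ : ∀ i ∈ p.vars, φ (X i) = X i) : φ p = p :=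
  hom_congr_vars (f₁ := (φ : MvPolynomial σ R →+* MvPolynomial σ R)) (f₂ := RingHom.id _)
    (RingHom.ext (AlgHomClass.commutes φ)) (fun i hi _ ↦ hφ i hi) rfl

theorem iterate_apply_eq_add_nsmul {M F : Type*} [AddMonoid M] [FunLike F M M]
    [AddMonoidHomClass F M M] (φ : F) {x y : M} (hx : φ x = x + y) (hy : φ y = y) (m : ℕ) :
    φ^[m] x = x + m • y := by
  induction m with
  | zero => simp
  | succ m ih =>
    rw [Function.iterate_succ_apply', ih, map_add, map_nsmul, hx, hy, add_assoc, ← succ_nsmul']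

section PolyAut

variable {k : Type*} [Field k] {n : ℕ} {G : PolyAut k n}

theorem isLocallyFinite_of_totalDegree_iterate_X_le {D : ℕ}
    (hG : ∀ (m : ℕ) (i : Fin n), (G^[m] (X i)).totalDegree ≤ D) : IsLocallyFinite G := by
  intro f
  have orbit_le : Submodule.span k (Set.range fun m : ℕ ↦ (G ^ m) f) ≤
      restrictTotalDegree (Fin n) k (D * f.totalDegree) := by
    rw [Submodule.span_le]
    rintro _ ⟨m, rfl⟩
    refine (mem_restrictTotalDegree _ _ _).2 (totalDegree_algHom_apply_le (G ^ m) fun i _ ↦ ?_)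
    rw [AlgEquiv.coe_pow]
    exact hG m i
  exact Submodule.finiteDimensional_of_le orbit_le

theorem IsAffine.totalDegree_apply_le (hG : IsAffine G) (f : MvPolynomial (Fin n) k) :
    (G f).totalDegree ≤ f.totalDegree :=
  (totalDegree_algHom_apply_le G fun i _ ↦ hG i).trans_eq (one_mul _)

theorem IsAffine.isLocallyFinite (hG : IsAffine G) : IsLocallyFinite G := by
  refine isLocallyFinite_of_totalDegree_iterate_X_le (D := 1) fun m i ↦ ?_
  induction m with
  | zero => exact (totalDegree_X i).le
  | succ m ih =>
    rw [Function.iterate_succ_apply']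
    exact (hG.totalDegree_apply_le _).trans ih

theorem IsElementary.isLocallyFinite (hG : IsElementary G) : IsLocallyFinite G := by
  obtain ⟨i, g, hig, hGi, hGj⟩ := hG
  have hGg : G g = g := algHom_apply_eq_self_of_vars G fun j hj ↦
    hGj j (ne_of_mem_of_not_mem hj hig)
  refine isLocallyFinite_of_totalDegree_iterate_X_le (D := max 1 g.totalDegree) fun m j ↦ ?_
  obtain rfl | hji := eq_or_ne j i
  · rw [iterate_apply_eq_add_nsmul G hGi hGg]
    exact (totalDegree_add _ _).trans
      (max_le_max (totalDegree_X j).le (totalDegree_smul_le m g))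
  · rw [Function.iterate_fixed (hGj j hji), totalDegree_X]
    exact le_max_left _ _

theorem tame_mem_locallyFinite_closure_general (hG : IsTame G) :
    G ∈ Subgroup.closure {H : PolyAut k n | IsLocallyFinite H} :=
  Subgroup.closure_mono
    (fun _ hH ↦ hH.elim IsAffine.isLocallyFinite IsElementary.isLocallyFinite) hG

end PolyAut

/-- Every tame automorphism of `kⁿ` belongs to the subgroup `𝓕ₙ` of `GAₙ` generated by
the locally finite automorphisms. -/
theorem tame_mem_locallyFinite_closure (k : Type*) [Field k] [CharZero k] (n : ℕ)
    (hn : 1 ≤ n) (F : PolyAut k n) (hF : IsTame F) :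
    F ∈ Subgroup.closure {G : PolyAut k n | IsLocallyFinite G} :=
  tame_mem_locallyFinite_closure_general hF
end
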